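/- arXiv:1712.04980 — 2 statements merged into one kernel-verified Lean document; each statement's English description precedes it below -/
import Mathlib

section
/- Fix n users indexed by Fin n (ordered by SIC decoding order, so user u experiences interference only from users k with k > u), m frequency resource blocks indexed by Fin m, channel gains h : Fin n → Fin m → ℝ with h u r > 0 for all u, r, noise power σ² > 0, bandwidth B > 0, rate requirements c : Fin n → ℝ, and power budgets Pmax : Fin n → ℝ. Define the rate of user u under powers p : Fin n → Fin m → ℝ as Rate u p = ∑_{r} B · log(1 + h u r · p u r / (σ² + ∑_{k > u} h k r · p k r)). Call p P2-feasible if p u r > 0 for all u, r; ∑_r p u r ≤ Pmax u for all u; and c u ≤ Rate u p for all u. Call a triple (S, Z, R) with S, Z : Fin n → Fin m → ℝ and R : Fin n → ℝ P3-feasible if c u ≤ R u for all u; ∑_r exp(S u r) ≤ Pmax u for all u; Z u r ≤ B · log(1 + h u r · exp(S u r) / (σ² + ∑_{k > u} h k r · exp(S k r))) for all u, r; and R u = ∑_r Z u r for all u. Then the infimum of ∑_{u,r} p u r over all P2-feasible p equals the infimum of ∑_{u,r} exp(S u r) over all P3-feasible (S, Z, R). (Theorem 1: optimization problem P2 is equivalent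 to optimization problem P3.) -/
open Finset

/-- Rate of user `u` under powers `p`, with SIC: user `u` sees interference
only from users `k > u`. -/
noncomputable def NomaRate {n m : ℕ} (h : Fin n → Fin m → ℝ) (σ2 B : ℝ)
    (u : Fin n) (p : Fin n → Fin m → ℝ) : ℝ :=
  ∑ r, B * Real.log (1 + h u r * p u r /
    (σ2 + ∑ k ∈ univ.filter (fun k => u < k), h k r * p k r))

/-!
Each positive power is the exponential of a real number, so `p u r = exp (S u r)` trades
positivity for a free variable. The rate bounds `Z u r ≤ rate` lose nothing: they are tight at
`Z = rate`, and lowering `Z` only makes `c u ≤ ∑ r, Z u r` harder to satisfy. Hence both problems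
attain exactly the same objective values, whatever the rate function is; the infima agree because
the sets do.
-/

section Relaxation

variable {ι κ : Type*}

theorem exists_forall_pos_iff_exists_exp (P : (ι → κ → ℝ) → Prop) :
    (∃ p, (∀ u r, 0 < p u r) ∧ P p) ↔ ∃ S : ι → κ → ℝ, P fun u r => Real.exp (S u r) := by
  constructor
  · rintro ⟨p, hp, hP⟩
    refine ⟨fun u r => Real.log (p u r), ?_⟩
    simpa only [Real.exp_log (hp _ _)] using hP
  · rintro ⟨S, hS⟩
    exact ⟨fun u r => Real.exp (S u r), fun u r => Real.exp_pos (S u r), hS⟩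

theorem forall_le_sum_iff_exists_slack [Fintype κ] {M : Type*} [AddCommMonoid M] [Preorder M]
    [AddLeftMono M] (c : ι → M) (f : ι → κ → M) :
    (∀ u, c u ≤ ∑ r, f u r) ↔ ∃ (Z : ι → κ → M) (R : ι → M),
      (∀ u, c u ≤ R u) ∧ (∀ u r, Z u r ≤ f u r) ∧ ∀ u, R u = ∑ r, Z u r := by
  constructor
  · intro hc
    exact ⟨f, fun u => ∑ r, f u r, hc, fun _ _ => le_rfl, fun _ => rfl⟩
  · rintro ⟨Z, R, hc, hZ, hR⟩ u
    calc
      c u ≤ R u := hc u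
      _ = ∑ r, Z u r := hR u
      _ ≤ ∑ r, f u r := Finset.sum_le_sum fun r _ => hZ u r

theorem P2_equiv_P3_general [Fintype ι] [Fintype κ] (rate : (ι → κ → ℝ) → ι → κ → ℝ)
    (c Pmax : ι → ℝ) :
    { x : ℝ | ∃ p : ι → κ → ℝ,
        (∀ u r, 0 < p u r) ∧
        (∀ u, ∑ r, p u r ≤ Pmax u) ∧
        (∀ u, c u ≤ ∑ r, rate p u r) ∧
        x = ∑ u, ∑ r, p u r } =
    { x : ℝ | ∃ (S Z : ι → κ → ℝ) (R : ι → ℝ),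
        (∀ u, c u ≤ R u) ∧
        (∀ u, ∑ r, Real.exp (S u r) ≤ Pmax u) ∧
        (∀ u r, Z u r ≤ rate (fun k s => Real.exp (S k s)) u r) ∧
        (∀ u, R u = ∑ r, Z u r) ∧
        x = ∑ u, ∑ r, Real.exp (S u r) } := by
  ext x
  refine (exists_forall_pos_iff_exists_exp _).trans (exists_congr fun S => ?_)
  simp only [forall_le_sum_iff_exists_slack, ← exists_and_left, ← exists_and_right]
  refine exists_congr fun Z => exists_congr fun R => ?_
  tauto

end Relaxation

/-- Theorem 1: problems P2 and P3 have the same optimal value. -/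
theorem P2_equiv_P3 {n m : ℕ} (h : Fin n → Fin m → ℝ) (hh : ∀ u r, 0 < h u r)
    (σ2 : ℝ) (hσ : 0 < σ2) (B : ℝ) (hB : 0 < B)
    (c : Fin n → ℝ) (Pmax : Fin n → ℝ) :
    sInf { x : ℝ | ∃ p : Fin n → Fin m → ℝ,
        (∀ u r, 0 < p u r) ∧
        (∀ u, ∑ r, p u r ≤ Pmax u) ∧
        (∀ u, c u ≤ NomaRate h σ2 B u p) ∧
        x = ∑ u, ∑ r, p u r } =
    sInf { x : ℝ | ∃ (S Z : Fin n → Fin m → ℝ) (R : Fin n → ℝ),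
        (∀ u, c u ≤ R u) ∧
        (∀ u, ∑ r, Real.exp (S u r) ≤ Pmax u) ∧
        (∀ u r, Z u r ≤ B * Real.log (1 + h u r * Real.exp (S u r) /
          (σ2 + ∑ k ∈ univ.filter (fun k => u < k), h k r * Real.exp (S k r)))) ∧
        (∀ u, R u = ∑ r, Z u r) ∧
        x = ∑ u, ∑ r, Real.exp (S u r) } :=
  congrArg sInf (P2_equiv_P3_general (fun p u r => B * Real.log (1 + h u r * p u r /
    (σ2 + ∑ k ∈ univ.filter (fun k => u < k), h k r * p k r))) c Pmax)
end

section
/- Fix n users indexed by Fin n, m resource blocks indexed by Fin m, channel gains h : Fin n → Fin m → ℝ with h u r > 0, noise power σ² > 0, rate requirements c : Fin n → ℝ, and power budgets Pmax : Fin n → ℝ. Consider triples (S, Z, R) with S, Z : Fin n → Fin m → ℝ and R : Fin n → ℝ. Then the set of triples satisfying: (C1) c u ≤ R u for all u; (C2) ∑_r exp(S u r) ≤ Pmax u for all u; (C3') Z u r + log( (σ² / h u r) · exp(-(S u r)) + ∑_{k > u} (h k r / h u r) · exp(S k r - S u r) ) ≤ 0 for all u, r; and (C4) R u = ∑_r Z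 u r for all u, is a convex set, and the objective function (S, Z, R) ↦ ∑_{u,r} exp(S u r) is convex. (Theorem 2: optimization problem P3 is convex in the high SINR regime.) -/
open Finset

/-!
A positive function `F` has convex logarithm as soon as `F x * exp (-τ)` is jointly convex in
`(x, τ)`: the epigraph `log (F x) ≤ τ` is its sublevel set at level `1`. For
`F = ∑ i, w i * exp (f i)` the joint convexity is clear, since multiplying by `exp (-τ)` only
shifts the exponents. Constraint C3' bounds a linear function plus such a log-sum-exp of linear
functions.
-/

section OrderedModule

variable {𝕜 E β : Type*} [Semiring 𝕜] [PartialOrder 𝕜] [AddCommMonoid E] [Module 𝕜 E] {A : Set E}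

lemma convexOn_finsetSum {ι : Type*} [AddCommMonoid β] [PartialOrder β] [IsOrderedAddMonoid β]
    [Module 𝕜 β] {s : Finset ι} {f : ι → E → β} (hA : Convex 𝕜 A)
    (hf : ∀ i ∈ s, ConvexOn 𝕜 A (f i)) : ConvexOn 𝕜 A (fun x => ∑ i ∈ s, f i x) := by
  classical
  induction s using Finset.induction_on with
  | empty => simpa using convexOn_const (0 : β) hA
  | insert i s his ih =>
    simp only [sum_insert his]
    exact (hf i (mem_insert_self i s)).add (ih fun j hj => hf j (mem_insert_of_mem hj))

lemma convexOn_sub_snd [AddCommGroup β] [PartialOrder β] [IsOrderedAddMonoid β] [Module 𝕜 β]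
    {f : E → β} (hf : ConvexOn 𝕜 A f) :
    ConvexOn 𝕜 (A ×ˢ Set.univ) (fun p : E × β => f p.1 - p.2) := by
  have hfst : ConvexOn 𝕜 (A ×ˢ Set.univ) (fun p : E × β => f p.1) :=
    (hf.comp_linearMap (LinearMap.fst 𝕜 E β)).subset (fun _ hp => hp.1) (hf.1.prod convex_univ)
  exact hfst.sub ((LinearMap.snd 𝕜 E β).concaveOn hfst.1)

end OrderedModule

section LogSumExp

variable {E : Type*} [AddCommMonoid E] [Module ℝ E] {A : Set E}

lemma convexOn_exp_comp {f : E → ℝ} (hf : ConvexOn ℝ A f) :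
    ConvexOn ℝ A (fun x => Real.exp (f x)) :=
  ⟨hf.1, fun _ hx _ hy _ _ ha hb hab =>
    (Real.exp_le_exp.2 (hf.2 hx hy ha hb hab)).trans
      (convexOn_exp.2 (Set.mem_univ _) (Set.mem_univ _) ha hb hab)⟩

lemma convexOn_log_of_convexOn_mul_exp_neg {F : E → ℝ} (hF : ∀ x ∈ A, 0 < F x)
    (hconv : ConvexOn ℝ (A ×ˢ Set.univ) (fun p : E × ℝ => F p.1 * Real.exp (-p.2))) :
    ConvexOn ℝ A (fun x => Real.log (F x)) := by
  refine convexOn_of_convex_epigraph ?_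
  convert hconv.convex_le 1 using 1
  ext ⟨x, τ⟩
  have epigraph_iff (hx : x ∈ A) : Real.log (F x) ≤ τ ↔ F x * Real.exp (-τ) ≤ 1 := by
    rw [Real.log_le_iff_le_exp (hF x hx), Real.exp_neg,
      mul_inv_le_iff₀ (Real.exp_pos τ), one_mul]
  simpa using epigraph_iff

lemma convexOn_log_mul_exp_add_sum_mul_exp {ι : Type*} {s : Finset ι} {w₀ : ℝ} {w : ι → ℝ}
    {f₀ : E → ℝ} {f : ι → E → ℝ} (hw₀ : 0 < w₀) (hw : ∀ i ∈ s, 0 ≤ w i) (hf₀ : ConvexOn ℝ A f₀)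
    (hf : ∀ i ∈ s, ConvexOn ℝ A (f i)) :
    ConvexOn ℝ A
      (fun x => Real.log (w₀ * Real.exp (f₀ x) + ∑ i ∈ s, w i * Real.exp (f i x))) := by
  have shifted {g : E → ℝ} {a : ℝ} (ha : 0 ≤ a) (hg : ConvexOn ℝ A g) :
      ConvexOn ℝ (A ×ˢ Set.univ) (fun p : E × ℝ => a * Real.exp (g p.1 - p.2)) :=
    (convexOn_exp_comp (convexOn_sub_snd hg)).smul ha
  have jointly_convex : ConvexOn ℝ (A ×ˢ Set.univ) (fun p : E × ℝ =>
      w₀ * Real.exp (f₀ p.1 - p.2) + ∑ i ∈ s, w i * Real.exp (f i p.1 - p.2)) :=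
    (shifted hw₀.le hf₀).add
      (convexOn_finsetSum (hf₀.1.prod convex_univ) fun i hi => shifted (hw i hi) (hf i hi))
  refine convexOn_log_of_convexOn_mul_exp_neg (fun x _ => ?_) ?_
  · exact add_pos_of_pos_of_nonneg (mul_pos hw₀ (Real.exp_pos _))
      (sum_nonneg fun i hi => mul_nonneg (hw i hi) (Real.exp_nonneg _))
  · simpa only [add_mul, sum_mul, mul_assoc, ← Real.exp_add, ← sub_eq_add_neg]
      using jointly_convex

end LogSumExp

section PowerControl

variable {U B : Type*}

/-- The decision variables `(S, Z, R)` of P3 for users `U` and resource blocks `B`: log-powers,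
rates per resource block, and total rates. -/
abbrev P3Variables (U B : Type*) : Type _ := (U → B → ℝ) × (U → B → ℝ) × (U → ℝ)

namespace P3Variables

/-- The variable `S u r` as a linear functional of the decision variables. -/
def logPower (u : U) (r : B) : P3Variables U B →ₗ[ℝ] ℝ :=
  LinearMap.proj r ∘ₗ LinearMap.proj u ∘ₗ LinearMap.fst ℝ _ _

/-- The variable `Z u r` as a linear functional of the decision variables. -/
def blockRate (u : U) (r : B) : P3Variables U B →ₗ[ℝ] ℝ :=
  LinearMap.proj r ∘ₗ LinearMap.proj u ∘ₗ LinearMap.fst ℝ _ _ ∘ₗ LinearMap.snd ℝ _ _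

/-- The variable `R u` as a linear functional of the decision variables. -/
def totalRate (u : U) : P3Variables U B →ₗ[ℝ] ℝ :=
  LinearMap.proj u ∘ₗ LinearMap.snd ℝ _ _ ∘ₗ LinearMap.snd ℝ _ _

end P3Variables

open P3Variables

lemma convexOn_exp_logPower (u : U) (r : B) :
    ConvexOn ℝ Set.univ (fun t : P3Variables U B => Real.exp (t.1 u r)) :=
  convexOn_exp_comp ((logPower u r).convexOn convex_univ)

lemma convexOn_sum_exp_logPower [Fintype B] (u : U) :
    ConvexOn ℝ Set.univ (fun t : P3Variables U B => ∑ r, Real.exp (t.1 u r)) :=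
  convexOn_finsetSum convex_univ fun r _ => convexOn_exp_logPower u r

lemma convexOn_blockRate_add_log_noise_add_interference (I : Finset U) {w₀ : ℝ} {w : U → ℝ}
    (hw₀ : 0 < w₀) (hw : ∀ k ∈ I, 0 ≤ w k) (u : U) (r : B) :
    ConvexOn ℝ Set.univ (fun t : P3Variables U B => t.2.1 u r +
      Real.log (w₀ * Real.exp (-(t.1 u r)) + ∑ k ∈ I, w k * Real.exp (t.1 k r - t.1 u r))) :=
  ((blockRate u r).convexOn convex_univ).add <|
    convexOn_log_mul_exp_add_sum_mul_exp hw₀ hw ((-logPower u r).convexOn convex_univ)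
      fun k _ => (logPower k r - logPower u r).convexOn convex_univ

lemma convex_setOf_totalRate_eq_sum_blockRate [Fintype B] (u : U) :
    Convex ℝ {t : P3Variables U B | t.2.2 u = ∑ r, t.2.1 u r} := by
  let aggregating : Submodule ℝ (P3Variables U B) :=
    LinearMap.eqLocus (totalRate u) (∑ r, blockRate u r)
  have coe_aggregating : (aggregating : Set (P3Variables U B)) =
      {t | t.2.2 u = ∑ r, t.2.1 u r} := by
    ext t
    simp [aggregating, totalRate, blockRate]
  exact coe_aggregating ▸ aggregating.convex

/-- Here `I u r` is the set of users whose signals interfere with user `u` on resource block `r`,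
so the SIC decoding order may vary from block to block. -/
theorem P3_convex_high_SINR_general [Fintype U] [Fintype B] (I : U → B → Finset U)
    (h : U → B → ℝ) (hh : ∀ u r, 0 < h u r) (σ2 : ℝ) (hσ : 0 < σ2) (c Pmax : U → ℝ) :
    Convex ℝ {t : P3Variables U B |
        (∀ u, c u ≤ t.2.2 u) ∧
        (∀ u, ∑ r, Real.exp (t.1 u r) ≤ Pmax u) ∧
        (∀ u r, t.2.1 u r + Real.log ((σ2 / h u r) * Real.exp (-(t.1 u r)) +
          ∑ k ∈ I u r, (h k r / h u r) * Real.exp (t.1 k r - t.1 u r)) ≤ 0) ∧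
        (∀ u, t.2.2 u = ∑ r, t.2.1 u r)} ∧
    ConvexOn ℝ Set.univ (fun t : P3Variables U B => ∑ u, ∑ r, Real.exp (t.1 u r)) := by
  refine ⟨?_, convexOn_finsetSum convex_univ fun u _ => convexOn_sum_exp_logPower u⟩
  have convex_sublevel {g : P3Variables U B → ℝ} (hg : ConvexOn ℝ Set.univ g) (b : ℝ) :
      Convex ℝ {t | g t ≤ b} := by simpa using hg.convex_le b
  simp only [Set.ofPred_and, Set.ofPred_forall]
  refine .inter ?minRate (.inter ?powerBudget (.inter ?blockRate ?aggregation))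
  case minRate =>
    exact convex_iInter fun u => convex_halfSpace_ge (totalRate u).isLinear (c u)
  case powerBudget =>
    exact convex_iInter fun u => convex_sublevel (convexOn_sum_exp_logPower u) (Pmax u)
  case blockRate =>
    exact convex_iInter₂ fun u r => convex_sublevel
      (convexOn_blockRate_add_log_noise_add_interference (I u r) (div_pos hσ (hh u r))
        (fun k _ => (div_pos (hh k r) (hh u r)).le) u r) 0
  case aggregation =>
    exact convex_iInter fun u => convex_setOf_totalRate_eq_sum_blockRate u

end PowerControl

/-- Theorem 2: problem P3 is convex in the high SINR regime — the feasible set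
(with constraint C3 replaced by its high-SINR log-sum-exp form C3') is convex
and the objective is convex. -/
theorem P3_convex_high_SINR
    {n m : ℕ} (h : Fin n → Fin m → ℝ) (hh : ∀ u r, 0 < h u r)
    (σ2 : ℝ) (hσ : 0 < σ2)
    (c : Fin n → ℝ) (Pmax : Fin n → ℝ) :
    Convex ℝ { t : (Fin n → Fin m → ℝ) × (Fin n → Fin m → ℝ) × (Fin n → ℝ) |
        (∀ u, c u ≤ t.2.2 u) ∧
        (∀ u, ∑ r, Real.exp (t.1 u r) ≤ Pmax u) ∧
        (∀ u r, t.2.1 u r + Real.log ((σ2 / h u r) * Real.exp (-(t.1 u r)) +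
          ∑ k ∈ univ.filter (fun k => u < k),
            (h k r / h u r) * Real.exp (t.1 k r - t.1 u r)) ≤ 0) ∧
        (∀ u, t.2.2 u = ∑ r, t.2.1 u r) } ∧
    ConvexOn ℝ Set.univ
      (fun t : (Fin n → Fin m → ℝ) × (Fin n → Fin m → ℝ) × (Fin n → ℝ) =>
        ∑ u, ∑ r, Real.exp (t.1 u r)) :=
  P3_convex_high_SINR_general (fun u _ => univ.filter (fun k => u < k)) h hh σ2 hσ c Pmax
end
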